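/- arXiv:2504.11600 — 2 statements merged into one kernel-verified Lean document; each statement's English description precedes it below -/
import Mathlib

section
/- For every a ∈ 𝔻, the Möbius maps satisfy φ_{ω_a} ∘ φ_a = −φ_{ω_a} and φ_a ∘ φ_{ω_a} = −φ_{−ω_a} on 𝔻 (and hence on 𝕋). -/
open MeasureTheory Complex

noncomputable section

/-- The Möbius transformation `φ_a(z) = (a - z)/(1 - conj a * z)`. -/
def phi (a z : ℂ) : ℂ := (a - z) / (1 - (starRingEnd ℂ) a * z)

/-- `ω_a`, the unique fixed point of `φ_a` inside the unit disk:
`ω_a = (1 - √(1 - |a|²))/conj a` for `a ≠ 0`, and `ω_0 = 0`. -/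
def omegaPt (a : ℂ) : ℂ :=
  if a = 0 then 0 else (1 - Real.sqrt (1 - ‖a‖ ^ 2)) / (starRingEnd ℂ) a

/-- `Ω_a = 2a/(1 + |a|²)`, the unique point of `𝔻` whose associated
Möbius map has fixed point `a`. -/
def OmegaPt (a : ℂ) : ℂ := 2 * a / ((1 + ‖a‖ ^ 2 : ℝ) : ℂ)

lemma omegaPt_eq (a : ℂ) (ha : ‖a‖ < 1) :
    omegaPt a = a / ((1 + Real.sqrt (1 - ‖a‖ ^ 2) : ℝ) : ℂ) := by
  unfold omegaPt
  split_ifs with h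
  · simp [h]
  · have hn : 0 ≤ 1 - ‖a‖ ^ 2 := by nlinarith [norm_nonneg a]
    have hr0 := Real.sqrt_nonneg (1 - ‖a‖ ^ 2)
    have hr := Real.sq_sqrt hn
    set r := Real.sqrt (1 - ‖a‖ ^ 2)
    have h1 : ((1 + r : ℝ) : ℂ) ≠ 0 := by
      exact_mod_cast (by positivity : (1 + r : ℝ) ≠ 0)
    have h2 : (starRingEnd ℂ) a ≠ 0 := by simpa using h
    rw [div_eq_div_iff h2 h1, Complex.mul_conj']
    have : (1 - r) * (1 + r) = ‖a‖ ^ 2 := by linarith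
    exact_mod_cast this

lemma den_ne (w z : ℂ) (hw : ‖w‖ < 1) (hz : ‖z‖ ≤ 1) : 1 - (starRingEnd ℂ) w * z ≠ 0 := by
  intro h
  have h1 : (starRingEnd ℂ) w * z = 1 := (sub_eq_zero.mp h).symm
  have h2 : ‖w‖ * ‖z‖ = 1 := by
    have := congrArg norm h1
    simpa using this
  nlinarith [norm_nonneg w, norm_nonneg z]

lemma omega_facts (a : ℂ) (ha : ‖a‖ < 1) :
    ‖omegaPt a‖ < 1 ∧ a * (1 + omegaPt a * (starRingEnd ℂ) (omegaPt a)) = 2 * omegaPt a := by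
  rw [omegaPt_eq a ha]
  have hn : 0 ≤ 1 - ‖a‖ ^ 2 := by nlinarith [norm_nonneg a]
  have hr0 := Real.sqrt_nonneg (1 - ‖a‖ ^ 2)
  have hr := Real.sq_sqrt hn
  set r := Real.sqrt (1 - ‖a‖ ^ 2)
  have h1 : ((1 + r : ℝ) : ℂ) ≠ 0 := by
    exact_mod_cast (by positivity : (1 + r : ℝ) ≠ 0)
  constructor
  · rw [norm_div, Complex.norm_real, Real.norm_of_nonneg (by positivity),
      div_lt_one (by positivity)]
    linarith
  · have h3 : a * (starRingEnd ℂ) a = 1 - (r : ℂ) ^ 2 := by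
      rw [Complex.mul_conj']
      have : ‖a‖ ^ 2 = 1 - r ^ 2 := by linarith
      exact_mod_cast this
    rw [map_div₀, Complex.conj_ofReal]
    push_cast at h1 ⊢
    field_simp
    linear_combination a * h3

lemma alg (a b w v z : ℂ) (hs : 1 + w * v ≠ 0) (ht : 1 - w * v ≠ 0)
    (h : a * (1 + w * v) = 2 * w) (h' : b * (1 + w * v) = 2 * v)
    (h1 : 1 - b * z ≠ 0) (h2 : 1 - v * z ≠ 0) (h3 : 1 + v * z ≠ 0) :
    (w - (a - z) / (1 - b * z)) / (1 - v * ((a - z) / (1 - b * z)))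
      = -((w - z) / (1 - v * z)) ∧
    (a - (w - z) / (1 - v * z)) / (1 - b * ((w - z) / (1 - v * z)))
      = (w + z) / (1 + v * z) := by
  obtain ⟨d, hd⟩ : ∃ d, d = 1 - b * z := ⟨_, rfl⟩
  obtain ⟨e, he⟩ : ∃ e, e = 1 - v * z := ⟨_, rfl⟩
  obtain ⟨f, hf⟩ : ∃ f, f = 1 + v * z := ⟨_, rfl⟩
  obtain ⟨s, hs'⟩ : ∃ s, s = 1 + w * v := ⟨_, rfl⟩
  obtain ⟨t, ht'⟩ : ∃ t, t = 1 - w * v := ⟨_, rfl⟩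
  rw [← hd] at h1 ⊢
  rw [← he] at h2 ⊢
  rw [← hf] at h3 ⊢
  rw [← hs'] at hs
  rw [← ht'] at ht
  have e1 : w - (a - z) / d = t / s * (z - w) / d := by
    field_simp
    rw [hs', ht', hd]
    linear_combination -h - w * z * h'
  have e2 : 1 - v * ((a - z) / d) = t / s * e / d := by
    field_simp
    rw [hs', ht', hd, he]
    linear_combination -v * h - z * h'
  have e3 : a - (w - z) / e = t / s * (w + z) / e := by
    field_simp
    rw [hs', ht', he]
    linear_combination (1 - v * z) * h
  have e4 : 1 - b * ((w - z) / e) = t / s * f / e := by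
    field_simp
    rw [hs', ht', he, hf]
    linear_combination (z - w) * h'
  rw [e1, e2, e3, e4]
  constructor
  · field_simp
    ring
  · field_simp

/-- For `a ∈ 𝔻`, the identities `φ_{ω_a} ∘ φ_a = -φ_{ω_a}` and
`φ_a ∘ φ_{ω_a} = -φ_{-ω_a}` hold on the closed unit disk (in particular on
`𝔻` and on `𝕋`). -/
theorem statement1 (a : ℂ) (ha : ‖a‖ < 1) (z : ℂ) (hz : ‖z‖ ≤ 1) :
    phi (omegaPt a) (phi a z) = -phi (omegaPt a) z ∧
    phi a (phi (omegaPt a) z) = -phi (-omegaPt a) z := by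
  obtain ⟨hw, h⟩ := omega_facts a ha
  unfold phi
  set w := omegaPt a
  have h' := congrArg (starRingEnd ℂ) h
  simp only [map_mul, map_add, map_one, Complex.conj_conj, map_ofNat] at h'
  have ht := den_ne w w hw hw.le
  have hs := den_ne w (-w) hw (by simpa using hw.le)
  have h3 := den_ne w (-z) hw (by simpa using hz)
  obtain ⟨A, B⟩ := alg a ((starRingEnd ℂ) a) w ((starRingEnd ℂ) w) z
    (by convert hs using 1; ring) (by convert ht using 1; ring) h
    (by rw [← h']; ring) (den_ne a z ha hz) (den_ne w z hw hz)
    (by convert h3 using 1; ring)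
  refine ⟨A, B.trans ?_⟩
  rw [map_neg, ← neg_div]
  congr 1 <;> ring

end
end

section
/- Let C be a bounded linear operator on a complex Hilbert space H with C² = I. Then C*C is a positive invertible operator, and the unitary part R = C·(C*C)^{−1/2} of the polar decomposition of C satisfies R* = R, R² = I, and R C R = C*. -/
open ContinuousLinearMap

/-- Let `C` be a bounded linear operator on a complex Hilbert space with
`C² = I`, and let `S` be the positive square root of `C*C` (i.e. `S ≥ 0` and
`S·S = C*C`).  Then `C*C` is positive and invertible, `S` is invertible, and
the unitary part `R = C·(C*C)^{-1/2} = C·S⁻¹` of the polar decomposition of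
`C` satisfies `R* = R`, `R² = I`, and `R C R = C*`. -/
theorem statement2 {H : Type*} [NormedAddCommGroup H] [InnerProductSpace ℂ H]
    [CompleteSpace H] (C S : H →L[ℂ] H) (hC : C * C = 1)
    (hSpos : S.IsPositive) (hSsq : S * S = adjoint C * C) :
    (adjoint C * C).IsPositive ∧
    IsUnit (adjoint C * C) ∧
    IsUnit S ∧
    adjoint (C * Ring.inverse S) = C * Ring.inverse S ∧
    (C * Ring.inverse S) * (C * Ring.inverse S) = 1 ∧
    (C * Ring.inverse S) * C * (C * Ring.inverse S) = adjoint C := by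
  have hD : adjoint C * adjoint C = 1 := by
    have := congrArg star hC
    rwa [star_mul, star_one] at this
  have hST : star S = S := hSpos.isSelfAdjoint
  have hA : IsUnit (adjoint C * C) :=
    IsUnit.mul ⟨⟨_, _, hD, hD⟩, rfl⟩ ⟨⟨_, _, hC, hC⟩, rfl⟩
  have hS : IsUnit S := by
    rw [← hSsq] at hA
    exact ((Commute.refl S).isUnit_mul_iff.mp hA).1
  have hApos : (adjoint C * C).IsPositive := ContinuousLinearMap.isPositive_adjoint_comp_self C
  set T := Ring.inverse S with hT
  have h1 : S * T = 1 := Ring.mul_inverse_cancel S hS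
  have h2 : T * S = 1 := Ring.inverse_mul_cancel S hS
  have hTs : adjoint T = T := by
    have h3 : star T * S = 1 := by
      have := congrArg star h1
      rwa [star_mul, star_one, hST] at this
    exact left_inv_eq_right_inv h3 h1
  have hTpos : T.IsPositive := by
    have := hSpos.conj_adjoint T
    have e : T ∘L S ∘L adjoint T = T := by
      change T * (S * adjoint T) = T
      rw [hTs, h1, mul_one]
    rwa [e] at this
  have hPpos : (C * T * adjoint C).IsPositive := hTpos.conj_adjoint C
  have hTT : T * T = C * adjoint C := by
    have a1 : (T * T) * (adjoint C * C) = 1 := by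
      rw [← hSsq, mul_assoc, ← mul_assoc T S S, h2, one_mul, h2]
    have a2 : (adjoint C * C) * (C * adjoint C) = 1 := by
      rw [mul_assoc, ← mul_assoc C C, hC, one_mul, hD]
    exact left_inv_eq_right_inv a1 a2
  have hPP : (C * T * adjoint C) * (C * T * adjoint C) = T * T := by
    calc _ = C * T * (adjoint C * C) * T * adjoint C := by simp only [mul_assoc]
      _ = C * (T * S) * (S * T) * adjoint C := by rw [← hSsq]; simp only [mul_assoc]
      _ = T * T := by rw [h1, h2, mul_one, mul_one, hTT]
  have hP : C * T * adjoint C = T := by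
    have b1 := CFC.sqrt_mul_self (C * T * adjoint C)
      ((ContinuousLinearMap.nonneg_iff_isPositive _).2 hPpos)
    have b2 := CFC.sqrt_mul_self T ((ContinuousLinearMap.nonneg_iff_isPositive _).2 hTpos)
    rw [← b1, hPP, b2]
  have hCT : C * T = T * adjoint C := by
    calc C * T = C * T * (adjoint C * adjoint C) := by rw [hD, mul_one]
      _ = C * T * adjoint C * adjoint C := by simp only [mul_assoc]
      _ = _ := by rw [hP]
  refine ⟨hApos, hA, hS, ?_, ?_, ?_⟩
  · change star (C * T) = C * T
    rw [star_mul, hCT]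
    change adjoint T * adjoint C = _
    rw [hTs]
  · calc C * T * (C * T) = T * adjoint C * (C * T) := by rw [← hCT]
      _ = T * (adjoint C * C) * T := by simp only [mul_assoc]
      _ = (T * S) * (S * T) := by rw [← hSsq]; simp only [mul_assoc]
      _ = 1 := by rw [h1, h2, mul_one]
  · calc C * T * C * (C * T) = C * T * (C * C) * T := by simp only [mul_assoc]
      _ = C * (T * T) := by rw [hC]; simp only [mul_assoc, one_mul]
      _ = adjoint C := by rw [hTT, ← mul_assoc, hC, one_mul]
end
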